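/- Discrete terminated fixed point with positive gap. Let ω be a regular averaging kernel with Δ-discretization ω̂, and let (hf, hg) ∈ 𝒳² satisfy the strictly positive gap condition with A(hf, hg) < −Δ‖ω‖∞. Then there exist (0,1)-interpolating F, G ∈ Ψ whose restrictions to the lattice {x_i = iΔ} form a spatial fixed point of the one-sided termination of the discrete spatially coupled recursion: F(x_i) = 0 for x_i < 0, F(x_i) = hf((G ⊗ ω̂)(x_i)) for x_i ≥ 0, and G(x_i) = hg((F ⊗ ω̂)(x_i)) for all i. -/

import Mathlib

open MeasureTheory Filter Set

noncomputable section

/-- Convolution `(f ⊗ ω)(x) = ∫ y, f y · ω (x − y)`. -/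
def conv (f ω : ℝ → ℝ) (x : ℝ) : ℝ := ∫ y : ℝ, f y * ω (x - y)

/-- `ω` is an averaging kernel: even, nonnegative, of bounded variation, integrating to 1. -/
def IsAveragingKernel (ω : ℝ → ℝ) : Prop :=
  (∀ x, ω (-x) = ω x) ∧ (∀ x, 0 ≤ ω x) ∧ BoundedVariationOn ω Set.univ ∧
    MeasureTheory.Integrable ω ∧ (∫ x : ℝ, ω x) = 1

/-- The essential supremum `‖ω‖∞` of a kernel, as a real number. -/
def kerSup (ω : ℝ → ℝ) : ℝ := (eLpNorm ω ⊤ MeasureTheory.volume).toReal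

/-- `ω` is regular: for some `W ∈ (0,∞]`, it vanishes outside `[−W, W]` and is
positive on `(−W, W)` (the case `W = ∞` being that `ω` is everywhere positive). -/
def IsRegularKernel (ω : ℝ → ℝ) : Prop :=
  (∀ x, 0 < ω x) ∨
    ∃ W : ℝ, 0 < W ∧ (∀ x, W < |x| → ω x = 0) ∧ (∀ x, |x| < W → 0 < ω x)

/-- Membership in `𝒳`: nondecreasing self-maps of `[0,1]`. -/
def MemX (h : ℝ → ℝ) : Prop :=
  MonotoneOn h (Icc 0 1) ∧ MapsTo h (Icc 0 1) (Icc 0 1)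

/-- Left limit `h(u−)` of `h ∈ 𝒳` at `u ∈ [0,1]`, with the convention `h(0−) = 0`. -/
def lm (h : ℝ → ℝ) (u : ℝ) : ℝ := if u ≤ 0 then 0 else sSup (h '' Ico 0 u)

/-- Right limit `h(u+)` of `h ∈ 𝒳` at `u ∈ [0,1]`, with the convention `h(1+) = 1`. -/
def rm (h : ℝ → ℝ) (u : ℝ) : ℝ := if 1 ≤ u then 1 else sInf (h '' Ioc u 1)

/-- A canonical generalized inverse of `h ∈ 𝒳` (any valid inverse has the same integrals,
so the potential below is unambiguous). -/
def Xinv (h : ℝ → ℝ) (v : ℝ) : ℝ := sInf ({1} ∪ {u ∈ Icc (0:ℝ) 1 | v ≤ h u})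

/-- The potential `Φ(hf, hg; u, v) = ∫₀ᵘ hg⁻¹ + ∫₀ᵛ hf⁻¹ − u·v`. -/
def Pot (hf hg : ℝ → ℝ) (u v : ℝ) : ℝ :=
  (∫ x in (0:ℝ)..u, Xinv hg x) + (∫ x in (0:ℝ)..v, Xinv hf x) - u * v

/-- `A(hf, hg) = Φ(hf, hg; 1, 1)`. -/
def Agap (hf hg : ℝ → ℝ) : ℝ := Pot hf hg 1 1

/-- `(u,v)` is a crossing point of `(hf, hg)`:
`u ∈ [hg(v−), hg(v+)]` and `v ∈ [hf(u−), hf(u+)]`. -/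
def IsCrossing (hf hg : ℝ → ℝ) (u v : ℝ) : Prop :=
  u ∈ Icc (0:ℝ) 1 ∧ v ∈ Icc (0:ℝ) 1 ∧
    u ∈ Icc (lm hg v) (rm hg v) ∧ v ∈ Icc (lm hf u) (rm hf u)

/-- The strictly positive gap condition: there is a nontrivial crossing point, and every
nontrivial crossing point satisfies `Φ(hf, hg; u, v) > max {0, A(hf, hg)}`. -/
def StrictPosGap (hf hg : ℝ → ℝ) : Prop :=
  (∃ u v, IsCrossing hf hg u v ∧ ¬(u = 0 ∧ v = 0) ∧ ¬(u = 1 ∧ v = 1)) ∧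
    ∀ u v, IsCrossing hf hg u v → ¬(u = 0 ∧ v = 0) → ¬(u = 1 ∧ v = 1) →
      max 0 (Agap hf hg) < Pot hf hg u v

/-- Membership in `Ψ`: nondecreasing functions `ℝ → [0,1]`. -/
def MemPsi (f : ℝ → ℝ) : Prop := Monotone f ∧ ∀ x, f x ∈ Icc (0:ℝ) 1

/-- `f` is `(a,b)`-interpolating: limits `a` at `−∞` and `b` at `+∞`. -/
def Interpolates (f : ℝ → ℝ) (a b : ℝ) : Prop :=
  Filter.Tendsto f Filter.atBot (nhds a) ∧ Filter.Tendsto f Filter.atTop (nhds b)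

/-- The `Δ`-discretization `ω̂ᵢ = ∫_{(i−1/2)Δ}^{(i+1/2)Δ} ω(z) dz` of a kernel. -/
def dker (ω : ℝ → ℝ) (Δ : ℝ) (i : ℤ) : ℝ :=
  ∫ z in (((i : ℝ) - 1/2) * Δ)..(((i : ℝ) + 1/2) * Δ), ω z

/-- Discrete convolution `(f ⊗ ω̂)(xᵢ) = Σⱼ ω̂_{i−j} f(xⱼ)`. -/
def dconv (f : ℤ → ℝ) (ωh : ℤ → ℝ) (i : ℤ) : ℝ := ∑' j : ℤ, ωh (i - j) * f j

/-!
Among all pairs of lattice profiles that one step of the terminated recursion does not decrease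
there is a greatest one, and it is a fixed point. Its right shift is again such a subsolution, so it
is monotone. It remains to identify its limits.

At `-∞` the gap condition forces `hg(0+) = 0`: on the box below a nontrivial crossing point, every
minimizer of the potential is a crossing point with potential at most `0`, hence the origin, whereas
`hg(0+) > 0` would make the potential vanish at some `(s, 0)` with `s > 0`.

At `+∞` it suffices to exhibit, for every `ε > 0`, a subsolution with potential at most
`A(hf, hg) + ε` at some pair of its values, since the gap condition makes `(1, 1)` the only point of
`[0,1]²` with potential at most `A(hf, hg) < 0`. Such a subsolution is a minimizer of a slightly
tilted energy on a long finite window of the half-lattice: criticality in each site is the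
subsolution inequality, and comparison with the profile that is `1` on the whole window, where the
boundary costs only a small fraction of the length, bounds the energy per site.
-/

open scoped Topology

/-! ### Generalized inverses and their primitives -/

lemma bddBelow_Xinv_set (h : ℝ → ℝ) (v : ℝ) :
    BddBelow ({1} ∪ {u ∈ Icc (0 : ℝ) 1 | v ≤ h u}) :=
  bddBelow_singleton.union (bddBelow_Icc.mono (sep_subset _ _))

lemma Xinv_mono (h : ℝ → ℝ) : Monotone (Xinv h) := fun v _ hvw ↦
  csInf_le_csInf (bddBelow_Xinv_set h v) ⟨1, Or.inl rfl⟩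
    (union_subset_union_right _ fun _ hu ↦ ⟨hu.1, hvw.trans hu.2⟩)

lemma Xinv_le {h : ℝ → ℝ} {u v : ℝ} (hu : u ∈ Icc (0 : ℝ) 1) (hv : v ≤ h u) : Xinv h v ≤ u :=
  csInf_le (bddBelow_Xinv_set h v) (Or.inr ⟨hu, hv⟩)

lemma Xinv_nonneg (h : ℝ → ℝ) (v : ℝ) : 0 ≤ Xinv h v := by
  refine le_csInf ⟨1, Or.inl rfl⟩ ?_
  rintro u (rfl | hu)
  exacts [zero_le_one, hu.1.1]

lemma le_Xinv {h : ℝ → ℝ} (hh : MonotoneOn h (Icc 0 1)) {u v : ℝ} (hu : u ∈ Icc (0 : ℝ) 1)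
    (hv : h u < v) : u ≤ Xinv h v := by
  refine le_csInf ⟨1, Or.inl rfl⟩ ?_
  rintro w (rfl | hw)
  · exact hu.2
  · exact (hh.reflect_lt hu hw.1 (hv.trans_le hw.2)).le

/-- The primitive `v ↦ ∫₀ᵛ h⁻¹`, whose two instances are the one-variable terms of the
potential `Pot`. -/
def invPrimitive (h : ℝ → ℝ) (v : ℝ) : ℝ := ∫ x in (0 : ℝ)..v, Xinv h x

lemma continuous_invPrimitive (h : ℝ → ℝ) : Continuous (invPrimitive h) :=
  intervalIntegral.continuous_primitive (fun _ _ ↦ (Xinv_mono h).intervalIntegrable) 0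

lemma invPrimitive_nonneg (h : ℝ → ℝ) {v : ℝ} (hv : 0 ≤ v) : 0 ≤ invPrimitive h v :=
  intervalIntegral.integral_nonneg hv fun x _ ↦ Xinv_nonneg h x

lemma invPrimitive_sub (h : ℝ → ℝ) (v w : ℝ) :
    invPrimitive h w - invPrimitive h v = ∫ x in v..w, Xinv h x :=
  intervalIntegral.integral_interval_sub_left
    (Xinv_mono h).intervalIntegrable (Xinv_mono h).intervalIntegrable

lemma mul_sub_le_invPrimitive_sub {h : ℝ → ℝ} (hh : MonotoneOn h (Icc 0 1)) {u v w : ℝ}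
    (hu : u ∈ Icc (0 : ℝ) 1) (hv : h u ≤ v) (hvw : v ≤ w) :
    u * (w - v) ≤ invPrimitive h w - invPrimitive h v := by
  have hle : ∫ _ in v..w, u ≤ ∫ x in v..w, Xinv h x :=
    intervalIntegral.integral_mono_on_of_le_Ioo hvw intervalIntegrable_const
      (Xinv_mono h).intervalIntegrable fun x hx ↦ le_Xinv hh hu (hv.trans_lt hx.1)
  rwa [intervalIntegral.integral_const, smul_eq_mul, mul_comm, ← invPrimitive_sub] at hle

lemma invPrimitive_sub_le {h : ℝ → ℝ} {u v w : ℝ} (hu : u ∈ Icc (0 : ℝ) 1) (hvw : v ≤ w)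
    (hw : w ≤ h u) : invPrimitive h w - invPrimitive h v ≤ u * (w - v) := by
  have hle : ∫ x in v..w, Xinv h x ≤ ∫ _ in v..w, u :=
    intervalIntegral.integral_mono_on hvw (Xinv_mono h).intervalIntegrable
      intervalIntegrable_const fun x hx ↦ Xinv_le hu (hx.2.trans hw)
  rwa [intervalIntegral.integral_const, smul_eq_mul, mul_comm, ← invPrimitive_sub] at hle

/-- The primitive of `h⁻¹ + δ` vanishing at `0`; for `δ > 0` it replaces `invPrimitive h` in
minimization problems to break ties downwards. -/
def tiltedPrimitive (h : ℝ → ℝ) (δ v : ℝ) : ℝ := invPrimitive h v + δ * v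

lemma continuous_tiltedPrimitive (h : ℝ → ℝ) (δ : ℝ) : Continuous (tiltedPrimitive h δ) :=
  (continuous_invPrimitive h).add (continuous_const_mul δ)

lemma invPrimitive_le_tiltedPrimitive (h : ℝ → ℝ) {δ v : ℝ} (hδ : 0 ≤ δ) (hv : 0 ≤ v) :
    invPrimitive h v ≤ tiltedPrimitive h δ v :=
  le_add_of_nonneg_right (mul_nonneg hδ hv)

-- The tilt `δ > 0` is what gives `v ≤ h c` instead of the weaker `v ≤ h (c+)`.
lemma le_of_isMinOn_tiltedPrimitive {h : ℝ → ℝ} (hh : MemX h) {c v δ : ℝ} (hδ : 0 < δ)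
    (hc : c ∈ Icc (0 : ℝ) 1)
    (hmin : IsMinOn (fun w ↦ tiltedPrimitive h δ w - w * c) (Icc 0 1) v) : v ≤ h c := by
  by_contra! hlt
  have hcompare : invPrimitive h v + δ * v - v * c ≤ invPrimitive h (h c) + δ * h c - h c * c :=
    hmin (hh.2 hc)
  have hgrowth := mul_sub_le_invPrimitive_sub hh.1 hc le_rfl hlt.le
  have htilt : 0 < δ * (v - h c) := mul_pos hδ (sub_pos.2 hlt)
  linarith

/-! ### One-sided limits -/

lemma le_lm {h : ℝ → ℝ} (hh : MapsTo h (Icc 0 1) (Icc 0 1)) {u x : ℝ} (hu : u ≤ 1) (hx : 0 ≤ x)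
    (hxu : x < u) : h x ≤ lm h u := by
  rw [lm, if_neg (hx.trans_lt hxu).not_ge]
  refine le_csSup ⟨1, ?_⟩ (mem_image_of_mem h ⟨hx, hxu⟩)
  rintro _ ⟨y, hy, rfl⟩
  exact (hh ⟨hy.1, hy.2.le.trans hu⟩).2

lemma lm_le {h : ℝ → ℝ} {u c : ℝ} (hc : 0 ≤ c) (hle : ∀ x ∈ Ico 0 u, h x ≤ c) : lm h u ≤ c := by
  unfold lm
  split_ifs with hu
  · exact hc
  · exact csSup_le ⟨h 0, mem_image_of_mem h ⟨le_rfl, not_le.1 hu⟩⟩ (forall_mem_image.2 hle)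

lemma lm_nonneg {h : ℝ → ℝ} (hh : MapsTo h (Icc 0 1) (Icc 0 1)) {u : ℝ} (hu : u ≤ 1) :
    0 ≤ lm h u := by
  rcases le_or_gt u 0 with hu₀ | hu₀
  · rw [lm, if_pos hu₀]
  · exact (hh ⟨le_rfl, zero_le_one⟩).1.trans (le_lm hh hu le_rfl hu₀)

lemma lm_monotoneOn {h : ℝ → ℝ} (hh : MapsTo h (Icc 0 1) (Icc 0 1)) :
    MonotoneOn (lm h) (Iic 1) := fun _ _ _ hw huw ↦
  lm_le (lm_nonneg hh hw) fun _ hx ↦ le_lm hh hw hx.1 (hx.2.trans_le huw)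

lemma lm_one_le_one {h : ℝ → ℝ} (hh : MapsTo h (Icc 0 1) (Icc 0 1)) : lm h 1 ≤ 1 :=
  lm_le zero_le_one fun _ hx ↦ (hh (Ico_subset_Icc_self hx)).2

lemma le_rm {h : ℝ → ℝ} {u c : ℝ} (hc : c ≤ 1) (hle : ∀ x ∈ Ioc u 1, c ≤ h x) : c ≤ rm h u := by
  unfold rm
  split_ifs with hu
  · exact hc
  · exact le_csInf ⟨h 1, mem_image_of_mem h ⟨not_le.1 hu, le_rfl⟩⟩ (forall_mem_image.2 hle)

lemma lm_le_of_isMinOn {h : ℝ → ℝ} (hh : MapsTo h (Icc 0 1) (Icc 0 1)) {u v b : ℝ} (hu : u ≤ 1)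
    (hv : 0 ≤ v) (hb : lm h u ≤ b)
    (hmin : IsMinOn (fun w ↦ invPrimitive h w - u * w) (Icc 0 b) v) : lm h u ≤ v := by
  refine lm_le hv fun y hy ↦ ?_
  by_contra! hlt
  have hy₁ : y ∈ Icc (0 : ℝ) 1 := ⟨hy.1, hy.2.le.trans hu⟩
  have hcompare : invPrimitive h v - u * v ≤ invPrimitive h (h y) - u * h y :=
    hmin ⟨(hh hy₁).1, (le_lm hh hu hy.1 hy.2).trans hb⟩
  have hgrowth := invPrimitive_sub_le hy₁ hlt.le le_rfl
  have hgain : 0 < (u - y) * (h y - v) := mul_pos (sub_pos.2 hy.2) (sub_pos.2 hlt)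
  linarith

lemma le_rm_of_isMinOn {h : ℝ → ℝ} (hh : MemX h) {u v b : ℝ} (hu : 0 ≤ u) (hvb : v ≤ b)
    (hb : b ≤ 1) (hmin : IsMinOn (fun w ↦ invPrimitive h w - u * w) (Icc 0 b) v) :
    v ≤ rm h u := by
  refine le_rm (hvb.trans hb) fun y hy ↦ ?_
  by_contra! hlt
  have hy₁ : y ∈ Icc (0 : ℝ) 1 := ⟨hu.trans hy.1.le, hy.2⟩
  have hcompare : invPrimitive h v - u * v ≤ invPrimitive h (h y) - u * h y :=
    hmin ⟨(hh.2 hy₁).1, hlt.le.trans hvb⟩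
  have hgrowth := mul_sub_le_invPrimitive_sub hh.1 hy₁ le_rfl hlt.le
  have hgain : 0 < (y - u) * (v - h y) := mul_pos (sub_pos.2 hy.1) (sub_pos.2 hlt)
  linarith

/-! ### Minimizers of the potential -/

lemma Pot_eq (hf hg : ℝ → ℝ) (u v : ℝ) :
    Pot hf hg u v = invPrimitive hg u + invPrimitive hf v - u * v := rfl

lemma Pot_zero_zero (hf hg : ℝ → ℝ) : Pot hf hg 0 0 = 0 := by simp [Pot]

lemma continuous_uncurry_Pot (hf hg : ℝ → ℝ) : Continuous (Function.uncurry (Pot hf hg)) :=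
  (((continuous_invPrimitive hg).comp continuous_fst).add
    ((continuous_invPrimitive hf).comp continuous_snd)).sub (continuous_fst.mul continuous_snd)

lemma exists_isMinOn_Pot (hf hg : ℝ → ℝ) {q : ℝ × ℝ} (hq : 0 ≤ q) :
    ∃ p ∈ Icc 0 q, IsMinOn (Function.uncurry (Pot hf hg)) (Icc 0 q) p :=
  isCompact_Icc.exists_isMinOn ⟨0, le_rfl, hq⟩ (continuous_uncurry_Pot hf hg).continuousOn

lemma isCrossing_of_isMinOn_Pot {hf hg : ℝ → ℝ} (hhf : MemX hf) (hhg : MemX hg) {p q : ℝ × ℝ}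
    (hq : q ≤ 1) (hqf : lm hf q.1 ≤ q.2) (hqg : lm hg q.2 ≤ q.1) (hp : p ∈ Icc 0 q)
    (hmin : IsMinOn (Function.uncurry (Pot hf hg)) (Icc 0 q) p) :
    IsCrossing hf hg p.1 p.2 := by
  obtain ⟨u, v⟩ := p
  obtain ⟨a, b⟩ := q
  obtain ⟨⟨hu₀ : 0 ≤ u, hv₀ : 0 ≤ v⟩, hua : u ≤ a, hvb : v ≤ b⟩ := hp
  obtain ⟨ha : a ≤ 1, hb : b ≤ 1⟩ := hq
  have hminu : IsMinOn (fun w ↦ invPrimitive hg w - v * w) (Icc 0 a) u := fun w hw ↦ by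
    have h : Pot hf hg u v ≤ Pot hf hg w v :=
      hmin (show ((w, v) : ℝ × ℝ) ∈ Icc 0 (a, b) from ⟨⟨hw.1, hv₀⟩, hw.2, hvb⟩)
    rw [Pot_eq, Pot_eq] at h
    change invPrimitive hg u - v * u ≤ invPrimitive hg w - v * w
    linarith
  have hminv : IsMinOn (fun w ↦ invPrimitive hf w - u * w) (Icc 0 b) v := fun w hw ↦ by
    have h : Pot hf hg u v ≤ Pot hf hg u w :=
      hmin (show ((u, w) : ℝ × ℝ) ∈ Icc 0 (a, b) from ⟨⟨hu₀, hw.1⟩, hua, hw.2⟩)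
    rw [Pot_eq, Pot_eq] at h
    change invPrimitive hf v - u * v ≤ invPrimitive hf w - u * w
    linarith
  have hu₁ := hua.trans ha
  have hv₁ := hvb.trans hb
  exact ⟨⟨hu₀, hu₁⟩, ⟨hv₀, hv₁⟩,
    ⟨lm_le_of_isMinOn hhg.2 hv₁ hu₀ ((lm_monotoneOn hhg.2 hv₁ hb hvb).trans hqg) hminu,
      le_rm_of_isMinOn hhg hv₀ hua ha hminu⟩,
    ⟨lm_le_of_isMinOn hhf.2 hu₁ hv₀ ((lm_monotoneOn hhf.2 hu₁ ha hua).trans hqf) hminv,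
      le_rm_of_isMinOn hhf hu₀ hvb hb hminv⟩⟩

namespace StrictPosGap

variable {hf hg : ℝ → ℝ}

lemma eq_zero_or_eq_one_of_isMinOn (hgap : StrictPosGap hf hg) (hhf : MemX hf) (hhg : MemX hg)
    {p q : ℝ × ℝ} (hq : q ≤ 1) (hqf : lm hf q.1 ≤ q.2) (hqg : lm hg q.2 ≤ q.1)
    (hp : p ∈ Icc 0 q) (hmin : IsMinOn (Function.uncurry (Pot hf hg)) (Icc 0 q) p) :
    p = 0 ∨ p = 1 := by
  by_contra! hne
  have hpos : max 0 (Agap hf hg) < Pot hf hg p.1 p.2 :=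
    hgap.2 p.1 p.2 (isCrossing_of_isMinOn_Pot hhf hhg hq hqf hqg hp hmin)
      (fun h ↦ hne.1 (Prod.ext h.1 h.2)) (fun h ↦ hne.2 (Prod.ext h.1 h.2))
  have hle : Pot hf hg p.1 p.2 ≤ Pot hf hg 0 0 :=
    hmin (show (0 : ℝ × ℝ) ∈ Icc 0 q from ⟨le_rfl, hp.1.trans hp.2⟩)
  rw [Pot_zero_zero] at hle
  exact (hle.trans (le_max_left 0 _)).not_gt hpos

lemma eq_one_of_isMinOn (hgap : StrictPosGap hf hg) (hhf : MemX hf) (hhg : MemX hg)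
    (hA : Agap hf hg < 0) {p : ℝ × ℝ} (hp : p ∈ Icc 0 1)
    (hmin : IsMinOn (Function.uncurry (Pot hf hg)) (Icc 0 1) p) : p = 1 := by
  refine (hgap.eq_zero_or_eq_one_of_isMinOn hhf hhg le_rfl (lm_one_le_one hhf.2)
    (lm_one_le_one hhg.2) hp hmin).resolve_left ?_
  rintro rfl
  have hle : Pot hf hg 0 0 ≤ Agap hf hg :=
    hmin (show (1 : ℝ × ℝ) ∈ Icc 0 1 from ⟨zero_le_one, le_rfl⟩)
  rw [Pot_zero_zero] at hle
  exact hle.not_gt hA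

lemma eq_one_of_Pot_le_Agap (hgap : StrictPosGap hf hg) (hhf : MemX hf) (hhg : MemX hg)
    (hA : Agap hf hg < 0) {p : ℝ × ℝ} (hp : p ∈ Icc 0 1)
    (hle : Pot hf hg p.1 p.2 ≤ Agap hf hg) : p = 1 := by
  obtain ⟨p₀, hp₀, hmin₀⟩ := exists_isMinOn_Pot hf hg (q := 1) zero_le_one
  obtain rfl := hgap.eq_one_of_isMinOn hhf hhg hA hp₀ hmin₀
  exact hgap.eq_one_of_isMinOn hhf hhg hA hp fun q hq ↦ hle.trans (hmin₀ hq)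

lemma eq_one_of_forall_exists_Pot_le (hgap : StrictPosGap hf hg) (hhf : MemX hf) (hhg : MemX hg)
    (hA : Agap hf hg < 0) {q : ℝ × ℝ} (hq : q ∈ Icc 0 1)
    (happrox : ∀ ε > 0, ∃ p ∈ Icc 0 q, Pot hf hg p.1 p.2 ≤ Agap hf hg + ε) : q = 1 := by
  obtain ⟨p₀, hp₀, hmin⟩ := exists_isMinOn_Pot hf hg hq.1
  have hle : Pot hf hg p₀.1 p₀.2 ≤ Agap hf hg := le_of_forall_pos_le_add fun ε hε ↦ by
    obtain ⟨p, hp, hpε⟩ := happrox ε hε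
    exact (hmin hp).trans hpε
  obtain rfl := hgap.eq_one_of_Pot_le_Agap hhf hhg hA ⟨hp₀.1, hp₀.2.trans hq.2⟩ hle
  exact le_antisymm hq.2 hp₀.2

lemma Pot_pos_of_le_crossing (hgap : StrictPosGap hf hg) (hhf : MemX hf) (hhg : MemX hg)
    {p q : ℝ × ℝ} (hq : IsCrossing hf hg q.1 q.2) (hq₁ : q ≠ 1) (hp : p ∈ Icc 0 q)
    (hp₀ : p ≠ 0) : 0 < Pot hf hg p.1 p.2 := by
  obtain ⟨ha, hb, hag, hbf⟩ := hq
  have hq_le : q ≤ 1 := ⟨ha.2, hb.2⟩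
  have eq_zero_of_isMinOn {r : ℝ × ℝ} (hr : r ∈ Icc 0 q)
      (hmin : IsMinOn (Function.uncurry (Pot hf hg)) (Icc 0 q) r) : r = 0 := by
    refine (hgap.eq_zero_or_eq_one_of_isMinOn hhf hhg hq_le hbf.1 hag.1 hr hmin).resolve_right ?_
    rintro rfl
    exact hq₁ (le_antisymm hq_le hr.2)
  obtain ⟨p₀, hp₀_mem, hmin₀⟩ := exists_isMinOn_Pot hf hg (hp.1.trans hp.2)
  obtain rfl := eq_zero_of_isMinOn hp₀_mem hmin₀
  by_contra! hle
  refine hp₀ (eq_zero_of_isMinOn hp fun r hr ↦ hle.trans ?_)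
  exact (Pot_zero_zero hf hg).symm.trans_le (hmin₀ hr)

lemma exists_lt_of_pos (hgap : StrictPosGap hf hg) (hhf : MemX hf) (hhg : MemX hg) {r : ℝ}
    (hr : 0 < r) : ∃ w ∈ Ioc (0 : ℝ) 1, hg w < r := by
  by_contra! hlarge
  obtain ⟨a, b, hcross, h₀, h₁⟩ := hgap.1
  have ⟨ha, hb, hag, _⟩ := hcross
  have ha_pos : 0 < a := by
    refine ha.1.lt_of_ne' fun ha₀ ↦ ?_
    have hb_pos : 0 < b := hb.1.lt_of_ne' fun hb₀ ↦ h₀ ⟨ha₀, hb₀⟩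
    have hle : hg (b / 2) ≤ a :=
      (le_lm hhg.2 hb.2 (half_pos hb_pos).le (half_lt_self hb_pos)).trans hag.1
    have hge := hlarge (b / 2) ⟨half_pos hb_pos, (half_le_self hb.1).trans hb.2⟩
    linarith
  set s := min r a
  have hs_pos : 0 < s := lt_min hr ha_pos
  have hPot_pos : 0 < Pot hf hg s 0 :=
    hgap.Pot_pos_of_le_crossing hhf hhg (p := (s, 0)) (q := (a, b)) hcross
      (fun h ↦ h₁ (Prod.ext_iff.1 h)) ⟨⟨hs_pos.le, le_rfl⟩, min_le_right r a, hb.1⟩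
      (fun h ↦ hs_pos.ne' (Prod.ext_iff.1 h).1)
  have hprimitive_le : ∀ w ∈ Ioc (0 : ℝ) 1, invPrimitive hg s ≤ w * s := fun w hw ↦ by
    simpa [invPrimitive] using
      invPrimitive_sub_le (Ioc_subset_Icc_self hw) hs_pos.le ((min_le_left r a).trans (hlarge w hw))
  have hprimitive_pos : 0 < invPrimitive hg s := by simpa [Pot, invPrimitive] using hPot_pos
  have hlimit : Tendsto (fun w ↦ w * s) (𝓝[>] 0) (𝓝 0) := by
    simpa using ((continuous_mul_const s).tendsto 0).mono_left nhdsWithin_le_nhds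
  refine hprimitive_pos.not_ge (ge_of_tendsto hlimit ?_)
  filter_upwards [Ioc_mem_nhdsGT one_pos] using hprimitive_le

lemma tendsto_zero (hgap : StrictPosGap hf hg) (hhf : MemX hf) (hhg : MemX hg) :
    Tendsto hg (𝓝[Icc 0 1] 0) (𝓝 0) := by
  refine tendsto_order.2 ⟨fun c hc ↦ ?_, fun r hr ↦ ?_⟩
  · filter_upwards [self_mem_nhdsWithin] with x hx using hc.trans_le (hhg.2 hx).1
  · obtain ⟨w, hw, hwr⟩ := hgap.exists_lt_of_pos hhf hhg hr
    filter_upwards [self_mem_nhdsWithin, nhdsWithin_le_nhds (Iio_mem_nhds hw.1)] with x hx hxw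
    exact (hhg.1 hx (Ioc_subset_Icc_self hw) hxw.le).trans_lt hwr

end StrictPosGap

/-! ### Coupled monotone maps -/

section CoupledFixedPoint

variable {α β : Type*} [ConditionallyCompleteLattice α]

lemma exists_greatest_postfixed {a b : α} (hab : a ≤ b) {T : α → α}
    (hT : MonotoneOn T (Icc a b)) (hmaps : MapsTo T (Icc a b) (Icc a b)) :
    ∃ x ∈ Icc a b, T x = x ∧ ∀ y ∈ Icc a b, y ≤ T y → y ≤ x := by
  have : Fact (a ≤ b) := ⟨hab⟩
  let T' : Icc a b →o Icc a b :=
    ⟨hmaps.restrict, fun x y hxy ↦ hT x.2 y.2 hxy⟩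
  exact ⟨T'.gfp, T'.gfp.2, congrArg Subtype.val T'.map_gfp,
    fun y hy hyT ↦ T'.le_gfp (a := ⟨y, hy⟩) hyT⟩

lemma exists_greatest_coupled_postfixed [Preorder β] {a b : α} {c d : β} (hab : a ≤ b)
    {S : α → β} {T : β → α} (hS : MonotoneOn S (Icc a b)) (hSmaps : MapsTo S (Icc a b) (Icc c d))
    (hT : MonotoneOn T (Icc c d)) (hTmaps : MapsTo T (Icc c d) (Icc a b)) :
    ∃ x ∈ Icc a b, T (S x) = x ∧
      ∀ x' ∈ Icc a b, ∀ y' ∈ Icc c d, x' ≤ T y' → y' ≤ S x' → x' ≤ x ∧ y' ≤ S x := by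
  obtain ⟨x, hx, hfix, hgreatest⟩ := exists_greatest_postfixed hab
    (T := T ∘ S) (hT.comp hS hSmaps) (hTmaps.comp hSmaps)
  refine ⟨x, hx, hfix, fun x' hx' y' hy' hxT hyS ↦ ?_⟩
  have hle : x' ≤ x := hgreatest x' hx' (hxT.trans (hT hy' (hSmaps hx') hyS))
  exact ⟨hle, hyS.trans (hS hx' hx hle)⟩

end CoupledFixedPoint

/-! ### Discrete kernels and convolution -/

lemma dker_nonneg {ω : ℝ → ℝ} {Δ : ℝ} (hΔ : 0 ≤ Δ) (hω : ∀ x, 0 ≤ ω x) : 0 ≤ dker ω Δ := fun i ↦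
  intervalIntegral.integral_nonneg (mul_le_mul_of_nonneg_right (by linarith) hΔ) fun x _ ↦ hω x

lemma dker_even {ω : ℝ → ℝ} (hω : ∀ x, ω (-x) = ω x) (Δ : ℝ) : Function.Even (dker ω Δ) := by
  intro i
  calc dker ω Δ (-i)
      = ∫ z in (((-i : ℤ) : ℝ) - 1 / 2) * Δ..(((-i : ℤ) : ℝ) + 1 / 2) * Δ, ω (-z) := by
        simp only [dker, hω]
    _ = dker ω Δ i := by
        rw [intervalIntegral.integral_comp_neg, dker]
        congr 1 <;> push_cast <;> ring

lemma hasSum_dker {ω : ℝ → ℝ} {Δ : ℝ} (hΔ : 0 < Δ) (hω : Integrable ω) :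
    HasSum (dker ω Δ) (∫ x, ω x) := by
  have hscaled : Integrable (fun x ↦ Δ * ω (Δ * x)) := (hω.comp_mul_left' hΔ.ne').const_mul Δ
  have hintegral : ∫ x, Δ * ω (Δ * x) = ∫ x, ω x := by
    rw [integral_const_mul, Measure.integral_comp_mul_left, abs_of_pos (inv_pos.2 hΔ), smul_eq_mul,
      mul_inv_cancel_left₀ hΔ.ne']
  have hcell (i : ℤ) :
      ∫ x in (-(1 / 2) + (i : ℝ))..(-(1 / 2) + (i : ℝ) + 1), Δ * ω (Δ * x) = dker ω Δ i := by
    rw [intervalIntegral.integral_const_mul, intervalIntegral.mul_integral_comp_mul_left, dker]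
    congr 1 <;> ring
  simpa only [hcell, hintegral] using hscaled.hasSum_intervalIntegral (-(1 / 2))

section Convolution

variable {k F : ℤ → ℝ}

lemma dconv_eq_tsum_sub (F k : ℤ → ℝ) (i : ℤ) : dconv F k i = ∑' m : ℤ, k m * F (i - m) := by
  rw [dconv, ← (Equiv.subLeft i).tsum_eq (fun m ↦ k m * F (i - m))]
  simp only [Equiv.subLeft_apply, sub_sub_cancel]

lemma dconv_shift (F k : ℤ → ℝ) (n i : ℤ) :
    dconv (fun j ↦ F (j - n)) k i = dconv F k (i - n) := by
  simp only [dconv_eq_tsum_sub, sub_right_comm]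

lemma dconv_eq_sum_of_support_subset {I : Finset ℤ} (hF : Function.support F ⊆ I) (k : ℤ → ℝ)
    (i : ℤ) : dconv F k i = ∑ j ∈ I, k (i - j) * F j :=
  tsum_eq_sum fun j hj ↦ by
    rw [Function.notMem_support.1 fun h ↦ hj (Finset.mem_coe.1 (hF h)), mul_zero]

lemma summable_mul_sub (hk₀ : 0 ≤ k) (hk : Summable k) (hF : F ∈ Icc 0 1) (i : ℤ) :
    Summable fun m ↦ k m * F (i - m) :=
  hk.of_nonneg_of_le (fun m ↦ mul_nonneg (hk₀ m) (hF.1 _))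
    fun m ↦ mul_le_of_le_one_right (hk₀ m) (hF.2 _)

lemma dconv_monotoneOn (hk₀ : 0 ≤ k) (hk : Summable k) :
    MonotoneOn (fun F ↦ dconv F k) (Icc 0 1) := fun _ hF _ hG hFG i ↦ by
  simp only [dconv_eq_tsum_sub]
  exact (summable_mul_sub hk₀ hk hF i).tsum_le_tsum
    (fun m ↦ mul_le_mul_of_nonneg_left (hFG _) (hk₀ m)) (summable_mul_sub hk₀ hk hG i)

lemma dconv_mem_Icc (hk₀ : 0 ≤ k) (hk₁ : HasSum k 1) (hF : F ∈ Icc 0 1) :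
    dconv F k ∈ Icc 0 1 := by
  refine ⟨fun i ↦ tsum_nonneg fun j ↦ mul_nonneg (hk₀ _) (hF.1 j), fun i ↦ ?_⟩
  rw [dconv_eq_tsum_sub, Pi.one_apply, ← hk₁.tsum_eq]
  exact (summable_mul_sub hk₀ hk₁.summable hF i).tsum_le_tsum
    (fun m ↦ mul_le_of_le_one_right (hk₀ m) (hF.2 _)) hk₁.summable

lemma tendsto_dconv_atBot (hk₀ : 0 ≤ k) (hk₁ : HasSum k 1) (hF : F ∈ Icc 0 1) {a : ℝ}
    (hFa : Tendsto F atBot (𝓝 a)) : Tendsto (dconv F k) atBot (𝓝 a) := by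
  have hlimit : ∑' m, k m * a = a := by rw [tsum_mul_right, hk₁.tsum_eq, one_mul]
  rw [funext (dconv_eq_tsum_sub F k), ← hlimit]
  refine tendsto_tsum_of_dominated_convergence hk₁.summable (fun m ↦ ?_) ?_
  · exact (hFa.comp (tendsto_atBot_add_const_right atBot (-m) tendsto_id)).const_mul (k m)
  · refine Eventually.of_forall fun i m ↦ ?_
    rw [Real.norm_of_nonneg (mul_nonneg (hk₀ m) (hF.1 _))]
    exact mul_le_of_le_one_right (hk₀ m) (hF.2 _)

end Convolution

/-! ### The terminated recursion on `ℤ` -/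

/-- One half-step `i ↦ h ((F ⊗ k)(i))` of the spatially coupled recursion, with the lattice
indexed by `ℤ`. -/
def latticeUpdate (h : ℝ → ℝ) (k F : ℤ → ℝ) : ℤ → ℝ := fun i ↦ h (dconv F k i)

section Update

variable {h : ℝ → ℝ} {k : ℤ → ℝ}

lemma mapsTo_latticeUpdate (hh : MapsTo h (Icc 0 1) (Icc 0 1)) (hk₀ : 0 ≤ k)
    (hk₁ : HasSum k 1) : MapsTo (latticeUpdate h k) (Icc 0 1) (Icc 0 1) := fun F hF ↦ by
  have hmem (i : ℤ) : latticeUpdate h k F i ∈ Icc (0 : ℝ) 1 :=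
    hh ⟨(dconv_mem_Icc hk₀ hk₁ hF).1 i, (dconv_mem_Icc hk₀ hk₁ hF).2 i⟩
  exact ⟨fun i ↦ (hmem i).1, fun i ↦ (hmem i).2⟩

lemma latticeUpdate_monotoneOn (hh : MonotoneOn h (Icc 0 1)) (hk₀ : 0 ≤ k) (hk₁ : HasSum k 1) :
    MonotoneOn (latticeUpdate h k) (Icc 0 1) := fun _ hF _ hG hFG i ↦
  have hFmem := dconv_mem_Icc hk₀ hk₁ hF
  have hGmem := dconv_mem_Icc hk₀ hk₁ hG
  hh ⟨hFmem.1 i, hFmem.2 i⟩ ⟨hGmem.1 i, hGmem.2 i⟩ (dconv_monotoneOn hk₀ hk₁.summable hF hG hFG i)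

lemma latticeUpdate_shift (h : ℝ → ℝ) (k F : ℤ → ℝ) (n i : ℤ) :
    latticeUpdate h k (fun j ↦ F (j - n)) i = latticeUpdate h k F (i - n) :=
  congrArg h (dconv_shift F k n i)

end Update

/-- The half-step that is terminated: it is set to `0` on the negative half-lattice. -/
def terminatedUpdate (h : ℝ → ℝ) (k G : ℤ → ℝ) : ℤ → ℝ := (Ici 0).indicator (latticeUpdate h k G)

section TerminatedUpdate

variable {h : ℝ → ℝ} {k : ℤ → ℝ}

lemma terminatedUpdate_of_neg (h : ℝ → ℝ) (k G : ℤ → ℝ) {i : ℤ} (hi : i < 0) :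
    terminatedUpdate h k G i = 0 :=
  indicator_of_notMem (notMem_Ici.2 hi) _

lemma terminatedUpdate_of_nonneg (h : ℝ → ℝ) (k G : ℤ → ℝ) {i : ℤ} (hi : 0 ≤ i) :
    terminatedUpdate h k G i = latticeUpdate h k G i :=
  indicator_of_mem (mem_Ici.2 hi) _

lemma mapsTo_terminatedUpdate (hh : MapsTo h (Icc 0 1) (Icc 0 1)) (hk₀ : 0 ≤ k)
    (hk₁ : HasSum k 1) : MapsTo (terminatedUpdate h k) (Icc 0 1) (Icc 0 1) := fun G hG ↦ by
  have hmem := mapsTo_latticeUpdate hh hk₀ hk₁ hG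
  exact ⟨indicator_nonneg fun i _ ↦ hmem.1 i, (indicator_le_self' fun i _ ↦ hmem.1 i).trans hmem.2⟩

lemma terminatedUpdate_monotoneOn (hh : MonotoneOn h (Icc 0 1)) (hk₀ : 0 ≤ k)
    (hk₁ : HasSum k 1) : MonotoneOn (terminatedUpdate h k) (Icc 0 1) := fun _ hF _ hG hFG i ↦
  indicator_le_indicator (latticeUpdate_monotoneOn hh hk₀ hk₁ hF hG hFG i)

end TerminatedUpdate

/-- `[0,1]`-valued lattice profiles that one parallel step of the terminated recursion does not
decrease. -/
structure IsTerminatedSubsolution (hf hg : ℝ → ℝ) (k F G : ℤ → ℝ) : Prop where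
  left_mem : F ∈ Icc 0 1
  right_mem : G ∈ Icc 0 1
  left_le : F ≤ terminatedUpdate hf k G
  right_le : G ≤ latticeUpdate hg k F

/-- `[0,1]`-valued lattice profiles that are fixed by the terminated recursion and dominate all its
subsolutions. -/
structure IsGreatestTerminatedFixedPoint (hf hg : ℝ → ℝ) (k F G : ℤ → ℝ) : Prop where
  left_mem : F ∈ Icc 0 1
  right_mem : G ∈ Icc 0 1
  left_eq : terminatedUpdate hf k G = F
  right_eq : latticeUpdate hg k F = G
  upper : ∀ F' G', IsTerminatedSubsolution hf hg k F' G' → F' ≤ F ∧ G' ≤ G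

section GreatestFixedPoint

variable {hf hg : ℝ → ℝ} {k F G : ℤ → ℝ}

lemma exists_isGreatestTerminatedFixedPoint (hhf : MemX hf) (hhg : MemX hg) (hk₀ : 0 ≤ k)
    (hk₁ : HasSum k 1) : ∃ F G, IsGreatestTerminatedFixedPoint hf hg k F G := by
  obtain ⟨F, hF, hfix, hupper⟩ := exists_greatest_coupled_postfixed zero_le_one
    (latticeUpdate_monotoneOn hhg.1 hk₀ hk₁) (mapsTo_latticeUpdate hhg.2 hk₀ hk₁)
    (terminatedUpdate_monotoneOn hhf.1 hk₀ hk₁) (mapsTo_terminatedUpdate hhf.2 hk₀ hk₁)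
  exact ⟨F, latticeUpdate hg k F, hF, mapsTo_latticeUpdate hhg.2 hk₀ hk₁ hF, hfix, rfl,
    fun F' G' h ↦ hupper F' h.left_mem G' h.right_mem h.left_le h.right_le⟩

namespace IsGreatestTerminatedFixedPoint

lemma isTerminatedSubsolution_shift (hmax : IsGreatestTerminatedFixedPoint hf hg k F G)
    (hhf : MapsTo hf (Icc 0 1) (Icc 0 1)) (hk₀ : 0 ≤ k) (hk₁ : HasSum k 1) :
    IsTerminatedSubsolution hf hg k (fun i ↦ F (i - 1)) (fun i ↦ G (i - 1)) := by
  have hG_mem : (fun i ↦ G (i - 1)) ∈ Icc (0 : ℤ → ℝ) 1 :=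
    ⟨fun i ↦ hmax.right_mem.1 (i - 1), fun i ↦ hmax.right_mem.2 (i - 1)⟩
  refine ⟨⟨fun i ↦ hmax.left_mem.1 (i - 1), fun i ↦ hmax.left_mem.2 (i - 1)⟩, hG_mem,
    fun i ↦ ?_, fun i ↦ ?_⟩
  · simp only [← hmax.left_eq]
    rcases lt_or_ge (i - 1) 0 with hi | hi
    · rw [terminatedUpdate_of_neg hf k G hi]
      exact (mapsTo_terminatedUpdate hhf hk₀ hk₁ hG_mem).1 i
    · rw [terminatedUpdate_of_nonneg hf k G hi, terminatedUpdate_of_nonneg hf k _ (by lia),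
        latticeUpdate_shift]
  · rw [latticeUpdate_shift, hmax.right_eq]

lemma monotone (hmax : IsGreatestTerminatedFixedPoint hf hg k F G)
    (hhf : MapsTo hf (Icc 0 1) (Icc 0 1)) (hk₀ : 0 ≤ k) (hk₁ : HasSum k 1) :
    Monotone F ∧ Monotone G := by
  obtain ⟨hF, hG⟩ := hmax.upper _ _ (hmax.isTerminatedSubsolution_shift hhf hk₀ hk₁)
  exact ⟨monotone_int_of_le_succ fun i ↦ by simpa using hF (i + 1),
    monotone_int_of_le_succ fun i ↦ by simpa using hG (i + 1)⟩

lemma tendsto_left_atBot (hmax : IsGreatestTerminatedFixedPoint hf hg k F G) :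
    Tendsto F atBot (𝓝 0) := by
  refine tendsto_const_nhds.congr' ?_
  filter_upwards [eventually_lt_atBot 0] with i hi
  rw [← hmax.left_eq, terminatedUpdate_of_neg hf k G hi]

lemma tendsto_right_atBot (hmax : IsGreatestTerminatedFixedPoint hf hg k F G)
    (hhf : MemX hf) (hhg : MemX hg) (hgap : StrictPosGap hf hg) (hk₀ : 0 ≤ k) (hk₁ : HasSum k 1) :
    Tendsto G atBot (𝓝 0) := by
  have hmem := dconv_mem_Icc hk₀ hk₁ hmax.left_mem
  have hconv : Tendsto (dconv F k) atBot (𝓝[Icc 0 1] 0) := tendsto_nhdsWithin_iff.2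
    ⟨tendsto_dconv_atBot hk₀ hk₁ hmax.left_mem hmax.tendsto_left_atBot,
      Eventually.of_forall fun i ↦ ⟨hmem.1 i, hmem.2 i⟩⟩
  exact hmax.right_eq ▸ (hgap.tendsto_zero hhf hhg).comp hconv

end IsGreatestTerminatedFixedPoint

end GreatestFixedPoint

/-! ### Finite windows -/

section Window

variable {k : ℤ → ℝ} {I : Finset ℤ}

lemma sum_sub_le_one (hk₀ : 0 ≤ k) (hk₁ : HasSum k 1) (I : Finset ℤ) (i : ℤ) :
    ∑ j ∈ I, k (i - j) ≤ 1 :=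
  sum_le_hasSum I (fun j _ ↦ hk₀ (i - j)) ((Equiv.subLeft i).hasSum_iff.2 hk₁)

lemma exists_lt_sum_Icc_neg {s c : ℝ} (hk : HasSum k s) (hc : c < s) :
    ∃ M : ℕ, c < ∑ m ∈ Finset.Icc (-M : ℤ) M, k m :=
  ((hk.comp Finset.tendsto_Icc_neg).eventually_const_lt hc).exists

lemma sum_Icc_neg_le_sum_sub (hk₀ : 0 ≤ k) {M i : ℤ} (hI : Finset.Icc (i - M) (i + M) ⊆ I) :
    ∑ m ∈ Finset.Icc (-M) M, k m ≤ ∑ j ∈ I, k (i - j) := by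
  calc ∑ m ∈ Finset.Icc (-M) M, k m = ∑ j ∈ Finset.Icc (i - M) (i + M), k (i - j) :=
        Finset.sum_nbij' (i - ·) (i - ·) (by grind) (by grind) (by grind) (by grind) (by grind)
    _ ≤ ∑ j ∈ I, k (i - j) := Finset.sum_le_sum_of_subset_of_nonneg hI fun j _ _ ↦ hk₀ _

lemma mul_sum_Icc_neg_le_sum_sum_sub (hk₀ : 0 ≤ k) (M n : ℕ) :
    n * ∑ m ∈ Finset.Icc (-M : ℤ) M, k m ≤
      ∑ i ∈ Finset.Ico (0 : ℤ) (n + 2 * M), ∑ j ∈ Finset.Ico (0 : ℤ) (n + 2 * M), k (i - j) := by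
  set I := Finset.Ico (0 : ℤ) (n + 2 * M)
  calc n * ∑ m ∈ Finset.Icc (-M : ℤ) M, k m
      = ∑ _i ∈ Finset.Ico (M : ℤ) (M + n), ∑ m ∈ Finset.Icc (-M : ℤ) M, k m := by simp
    _ ≤ ∑ i ∈ Finset.Ico (M : ℤ) (M + n), ∑ j ∈ I, k (i - j) :=
        Finset.sum_le_sum fun i hi ↦ sum_Icc_neg_le_sum_sub hk₀ (by grind)
    _ ≤ ∑ i ∈ I, ∑ j ∈ I, k (i - j) :=
        Finset.sum_le_sum_of_subset_of_nonneg (by grind)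
          fun i _ _ ↦ Finset.sum_nonneg fun j _ ↦ hk₀ _

lemma exists_window_card_sub_lt (hk₀ : 0 ≤ k) (hk₁ : HasSum k 1) {δ : ℝ} (hδ : 0 < δ) :
    ∃ I : Finset ℤ, (∀ i ∈ I, 0 ≤ i) ∧
      (I.card : ℝ) - ∑ i ∈ I, ∑ j ∈ I, k (i - j) < δ * I.card := by
  obtain ⟨M, hM⟩ := exists_lt_sum_Icc_neg hk₁ (sub_lt_self 1 (half_pos hδ))
  obtain ⟨n, hn⟩ := exists_nat_gt (2 * M / (δ / 2))
  rw [div_lt_iff₀ (half_pos hδ)] at hn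
  refine ⟨Finset.Ico (0 : ℤ) (n + 2 * M), fun i hi ↦ (Finset.mem_Ico.1 hi).1, ?_⟩
  have hcard : ((Finset.Ico (0 : ℤ) (n + 2 * M)).card : ℝ) = n + 2 * M := by
    rw [Int.card_Ico, sub_zero]
    exact_mod_cast congrArg Nat.cast (Int.toNat_natCast (n + 2 * M))
  have hmass : n * (1 - δ / 2) ≤ _ :=
    (mul_le_mul_of_nonneg_left hM.le n.cast_nonneg).trans (mul_sum_Icc_neg_le_sum_sum_sub hk₀ M n)
  have hM_nonneg : 0 ≤ δ * (2 * M) := by positivity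
  rw [hcard]
  linarith

end Window

/-! ### The energy of a pair of profiles on a finite window -/

/-- The spatially coupled analogue of the potential on the window `I`, with `φ` and `γ` in place of
the primitives of `hf⁻¹` and `hg⁻¹`; the coupling to sites outside `I` is dropped. -/
def windowEnergy (φ γ : ℝ → ℝ) (k : ℤ → ℝ) (I : Finset ℤ) (F G : ℤ → ℝ) : ℝ :=
  ∑ i ∈ I, γ (G i) + ∑ j ∈ I, φ (F j) - ∑ i ∈ I, ∑ j ∈ I, k (i - j) * (G i * F j)

/-- `[0,1]`-valued profiles supported in the window `I`. -/
def windowProfiles (I : Finset ℤ) : Set (ℤ → ℝ) := Icc 0 ((I : Set ℤ).indicator 1)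

section WindowProfiles

variable {F : ℤ → ℝ} {I : Finset ℤ}

lemma indicator_one_mem_windowProfiles (I : Finset ℤ) :
    (I : Set ℤ).indicator 1 ∈ windowProfiles I :=
  ⟨indicator_nonneg fun _ _ ↦ zero_le_one, le_rfl⟩

lemma windowProfiles_subset_Icc (I : Finset ℤ) : windowProfiles I ⊆ Icc 0 1 :=
  Icc_subset_Icc_right (indicator_le_self' fun _ _ ↦ zero_le_one)

lemma eq_zero_of_mem_windowProfiles (hF : F ∈ windowProfiles I) {i : ℤ} (hi : i ∉ I) : F i = 0 :=
  le_antisymm ((hF.2 i).trans_eq (indicator_of_notMem hi 1)) (hF.1 i)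

lemma support_subset_of_mem_windowProfiles (hF : F ∈ windowProfiles I) :
    Function.support F ⊆ I := fun _ hi ↦ by_contra fun hiI ↦
  hi (eq_zero_of_mem_windowProfiles hF hiI)

lemma update_mem_windowProfiles (hF : F ∈ windowProfiles I) {i : ℤ} (hi : i ∈ I) {w : ℝ}
    (hw : w ∈ Icc (0 : ℝ) 1) : Function.update F i w ∈ windowProfiles I := by
  refine ⟨le_update_iff.2 ⟨hw.1, fun j _ ↦ hF.1 j⟩,
    update_le_iff.2 ⟨?_, fun j _ ↦ hF.2 j⟩⟩
  rw [indicator_of_mem (Finset.mem_coe.2 hi)]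
  exact hw.2

end WindowProfiles

section WindowEnergy

variable {φ γ : ℝ → ℝ} {k F G : ℤ → ℝ} {I : Finset ℤ}

lemma windowEnergy_swap (hk : Function.Even k) (φ γ : ℝ → ℝ) (I : Finset ℤ) (F G : ℤ → ℝ) :
    windowEnergy φ γ k I F G = windowEnergy γ φ k I G F := by
  have hcoupling : ∑ i ∈ I, ∑ j ∈ I, k (i - j) * (G i * F j) =
      ∑ i ∈ I, ∑ j ∈ I, k (i - j) * (F i * G j) := by
    rw [Finset.sum_comm]
    refine Finset.sum_congr rfl fun i _ ↦ Finset.sum_congr rfl fun j _ ↦ ?_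
    rw [← hk (j - i), neg_sub, mul_comm (G j)]
  rw [windowEnergy, windowEnergy, hcoupling, add_comm (∑ i ∈ I, γ (G i))]

lemma exists_isMinOn_windowEnergy (hφ : Continuous φ) (hγ : Continuous γ) (k : ℤ → ℝ)
    (I : Finset ℤ) : ∃ F ∈ windowProfiles I, ∃ G ∈ windowProfiles I,
      ∀ F' ∈ windowProfiles I, ∀ G' ∈ windowProfiles I,
        windowEnergy φ γ k I F G ≤ windowEnergy φ γ k I F' G' := by
  have hcont : Continuous fun p : (ℤ → ℝ) × (ℤ → ℝ) ↦ windowEnergy φ γ k I p.1 p.2 := by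
    unfold windowEnergy
    fun_prop
  have hcompact : IsCompact (windowProfiles I ×ˢ windowProfiles I) :=
    isCompact_Icc.prod isCompact_Icc
  have hone := indicator_one_mem_windowProfiles I
  obtain ⟨⟨F, G⟩, ⟨hF, hG⟩, hmin⟩ := hcompact.exists_isMinOn ⟨(_, _), hone, hone⟩ hcont.continuousOn
  exact ⟨F, hF, G, hG, fun F' hF' G' hG' ↦ hmin (mk_mem_prod hF' hG')⟩

lemma windowEnergy_eq_sum_sub_dconv (hF : Function.support F ⊆ I) (φ γ : ℝ → ℝ) (k G : ℤ → ℝ) :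
    windowEnergy φ γ k I F G =
      ∑ i ∈ I, (γ (G i) - G i * dconv F k i) + ∑ j ∈ I, φ (F j) := by
  have hcoupling (i : ℤ) : ∑ j ∈ I, k (i - j) * (G i * F j) = G i * dconv F k i := by
    rw [dconv_eq_sum_of_support_subset hF, Finset.mul_sum]
    exact Finset.sum_congr rfl fun j _ ↦ mul_left_comm _ _ _
  simp only [windowEnergy, hcoupling, Finset.sum_sub_distrib]
  ring

lemma isMinOn_site_of_isMinOn_windowEnergy (hF : Function.support F ⊆ I)
    (hG : G ∈ windowProfiles I)
    (hmin : IsMinOn (windowEnergy φ γ k I F) (windowProfiles I) G) {i : ℤ} (hi : i ∈ I) :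
    IsMinOn (fun w ↦ γ w - w * dconv F k i) (Icc 0 1) (G i) := fun w hw ↦ by
  have hle : windowEnergy φ γ k I F G ≤ windowEnergy φ γ k I F (Function.update G i w) :=
    hmin (update_mem_windowProfiles hG hi hw)
  have hrest : ∑ j ∈ I.erase i,
      (γ (Function.update G i w j) - Function.update G i w j * dconv F k j) =
        ∑ j ∈ I.erase i, (γ (G j) - G j * dconv F k j) :=
    Finset.sum_congr rfl fun j hj ↦ by rw [Function.update_of_ne (Finset.ne_of_mem_erase hj)]
  rwa [windowEnergy_eq_sum_sub_dconv hF, windowEnergy_eq_sum_sub_dconv hF, add_le_add_iff_right,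
    ← Finset.add_sum_erase I _ hi, ← Finset.add_sum_erase I _ hi, hrest, Function.update_self,
    add_le_add_iff_right] at hle

lemma le_latticeUpdate_of_isMinOn_windowEnergy {h : ℝ → ℝ} (hh : MemX h) {δ : ℝ} (hδ : 0 < δ)
    (hk₀ : 0 ≤ k) (hk₁ : HasSum k 1) (hF : F ∈ windowProfiles I) (hG : G ∈ windowProfiles I)
    (hmin : IsMinOn (windowEnergy φ (tiltedPrimitive h δ) k I F) (windowProfiles I) G) :
    G ≤ latticeUpdate h k F := fun i ↦ by
  have hF₁ := windowProfiles_subset_Icc I hF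
  have hconv := dconv_mem_Icc hk₀ hk₁ hF₁
  by_cases hi : i ∈ I
  · exact le_of_isMinOn_tiltedPrimitive hh hδ ⟨hconv.1 i, hconv.2 i⟩
      (isMinOn_site_of_isMinOn_windowEnergy (support_subset_of_mem_windowProfiles hF) hG hmin hi)
  · rw [eq_zero_of_mem_windowProfiles hG hi]
    exact (mapsTo_latticeUpdate hh.2 hk₀ hk₁ hF₁).1 i

lemma windowEnergy_indicator_one (φ γ : ℝ → ℝ) (k : ℤ → ℝ) (I : Finset ℤ) :
    windowEnergy φ γ k I ((I : Set ℤ).indicator 1) ((I : Set ℤ).indicator 1) =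
      I.card * (γ 1 + φ 1) - ∑ i ∈ I, ∑ j ∈ I, k (i - j) := by
  have hone : ∀ i ∈ I, (I : Set ℤ).indicator (1 : ℤ → ℝ) i = 1 := fun i hi ↦
    indicator_of_mem (Finset.mem_coe.2 hi) 1
  have hγ : ∑ i ∈ I, γ ((I : Set ℤ).indicator 1 i) = I.card * γ 1 := by
    rw [Finset.sum_congr rfl fun i hi ↦ by rw [hone i hi], Finset.sum_const, nsmul_eq_mul]
  have hφ : ∑ i ∈ I, φ ((I : Set ℤ).indicator 1 i) = I.card * φ 1 := by
    rw [Finset.sum_congr rfl fun i hi ↦ by rw [hone i hi], Finset.sum_const, nsmul_eq_mul]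
  rw [windowEnergy, hγ, hφ, ← mul_add]
  congr 1
  refine Finset.sum_congr rfl fun i hi ↦ Finset.sum_congr rfl fun j hj ↦ ?_
  rw [hone i hi, hone j hj, mul_one, mul_one]

lemma card_mul_le_windowEnergy (hk₀ : 0 ≤ k) (hk_even : Function.Even k) (hk₁ : HasSum k 1)
    {c : ℝ} (hc : c ≤ 0) (hφ : ∀ j ∈ I, 0 ≤ φ (F j)) (hγ : ∀ i ∈ I, 0 ≤ γ (G i))
    (hle : ∀ i ∈ I, ∀ j ∈ I, c ≤ γ (G i) + φ (F j) - G i * F j) :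
    I.card * c ≤ windowEnergy φ γ k I F G := by
  have hrow (i : ℤ) := sum_sub_le_one hk₀ hk₁ I i
  have hcolumn (j : ℤ) : ∑ i ∈ I, k (i - j) ≤ 1 := by
    simpa only [← hk_even (_ - j), neg_sub] using hrow j
  have hc_sum : I.card * c ≤ ∑ i ∈ I, ∑ j ∈ I, k (i - j) * c := by
    rw [← nsmul_eq_mul]
    refine Finset.card_nsmul_le_sum I _ c fun i _ ↦ ?_
    rw [← Finset.sum_mul]
    exact le_mul_of_le_one_left hc (hrow i)
  have hγ_sum : ∑ i ∈ I, ∑ j ∈ I, k (i - j) * γ (G i) ≤ ∑ i ∈ I, γ (G i) :=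
    Finset.sum_le_sum fun i hi ↦ by
      rw [← Finset.sum_mul]
      exact mul_le_of_le_one_left (hγ i hi) (hrow i)
  have hφ_sum : ∑ i ∈ I, ∑ j ∈ I, k (i - j) * φ (F j) ≤ ∑ j ∈ I, φ (F j) := by
    rw [Finset.sum_comm]
    refine Finset.sum_le_sum fun j hj ↦ ?_
    rw [← Finset.sum_mul]
    exact mul_le_of_le_one_left (hφ j hj) (hcolumn j)
  calc I.card * c ≤ ∑ i ∈ I, ∑ j ∈ I, k (i - j) * c := hc_sum
    _ ≤ ∑ i ∈ I, ∑ j ∈ I, k (i - j) * (γ (G i) + φ (F j) - G i * F j) :=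
        Finset.sum_le_sum fun i hi ↦ Finset.sum_le_sum fun j hj ↦
          mul_le_mul_of_nonneg_left (hle i hi j hj) (hk₀ _)
    _ = ∑ i ∈ I, ∑ j ∈ I, k (i - j) * γ (G i) + ∑ i ∈ I, ∑ j ∈ I, k (i - j) * φ (F j) -
          ∑ i ∈ I, ∑ j ∈ I, k (i - j) * (G i * F j) := by
        simp only [mul_sub, mul_add, Finset.sum_sub_distrib, Finset.sum_add_distrib]
    _ ≤ windowEnergy φ γ k I F G := sub_le_sub_right (add_le_add hγ_sum hφ_sum) _

end WindowEnergy

/-! ### Subsolutions of nearly minimal potential -/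

section Subsolution

variable {hf hg : ℝ → ℝ} {k F G : ℤ → ℝ} {I : Finset ℤ} {δ : ℝ}

lemma isTerminatedSubsolution_of_minimizes_windowEnergy (hhf : MemX hf) (hhg : MemX hg)
    (hk₀ : 0 ≤ k) (hk_even : Function.Even k) (hk₁ : HasSum k 1) (hδ : 0 < δ)
    (hI : ∀ i ∈ I, 0 ≤ i) (hF : F ∈ windowProfiles I) (hG : G ∈ windowProfiles I)
    (hmin : ∀ F' ∈ windowProfiles I, ∀ G' ∈ windowProfiles I,
      windowEnergy (tiltedPrimitive hf δ) (tiltedPrimitive hg δ) k I F G ≤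
        windowEnergy (tiltedPrimitive hf δ) (tiltedPrimitive hg δ) k I F' G') :
    IsTerminatedSubsolution hf hg k F G := by
  have hG_le : G ≤ latticeUpdate hg k F :=
    le_latticeUpdate_of_isMinOn_windowEnergy hhg hδ hk₀ hk₁ hF hG fun G' hG' ↦ hmin F hF G' hG'
  have hF_le : F ≤ latticeUpdate hf k G := by
    refine le_latticeUpdate_of_isMinOn_windowEnergy (φ := tiltedPrimitive hg δ) hhf hδ hk₀ hk₁ hG hF
      fun F' hF' ↦ ?_
    have hle := hmin F' hF' G hG
    rwa [windowEnergy_swap hk_even, windowEnergy_swap hk_even _ _ I F'] at hle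
  refine ⟨windowProfiles_subset_Icc I hF, windowProfiles_subset_Icc I hG, fun i ↦ ?_, hG_le⟩
  rcases lt_or_ge i 0 with hi | hi
  · rw [terminatedUpdate_of_neg hf k G hi,
      eq_zero_of_mem_windowProfiles hF fun hiI ↦ (hI i hiI).not_gt hi]
  · exact terminatedUpdate_of_nonneg hf k G hi ▸ hF_le i

lemma exists_Pot_lt_of_windowEnergy_lt (hk₀ : 0 ≤ k) (hk_even : Function.Even k)
    (hk₁ : HasSum k 1) (hδ : 0 ≤ δ) (hF : 0 ≤ F) (hG : 0 ≤ G) {c : ℝ} (hc : c ≤ 0)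
    (hlt : windowEnergy (tiltedPrimitive hf δ) (tiltedPrimitive hg δ) k I F G < I.card * c) :
    ∃ i j, Pot hf hg (G i) (F j) < c := by
  by_contra! hle
  have hf_le (j : ℤ) := invPrimitive_le_tiltedPrimitive hf hδ (hF j)
  have hg_le (i : ℤ) := invPrimitive_le_tiltedPrimitive hg hδ (hG i)
  refine hlt.not_ge (card_mul_le_windowEnergy hk₀ hk_even hk₁ hc
    (fun j _ ↦ (invPrimitive_nonneg hf (hF j)).trans (hf_le j))
    (fun i _ ↦ (invPrimitive_nonneg hg (hG i)).trans (hg_le i)) fun i _ j _ ↦ (hle i j).trans ?_)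
  rw [Pot_eq]
  exact sub_le_sub_right (add_le_add (hg_le i) (hf_le j)) _

lemma exists_isTerminatedSubsolution_Pot_lt (hhf : MemX hf) (hhg : MemX hg) (hk₀ : 0 ≤ k)
    (hk_even : Function.Even k) (hk₁ : HasSum k 1) {c : ℝ} (hAc : Agap hf hg < c) (hc : c ≤ 0) :
    ∃ F G, IsTerminatedSubsolution hf hg k F G ∧ ∃ i j, Pot hf hg (G i) (F j) < c := by
  obtain ⟨δ, hδ, hδc⟩ : ∃ δ > 0, Agap hf hg + 3 * δ = c :=
    ⟨(c - Agap hf hg) / 3, by linarith, by ring⟩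
  obtain ⟨I, hI, hmass⟩ := exists_window_card_sub_lt hk₀ hk₁ hδ
  obtain ⟨F, hF, G, hG, hmin⟩ := exists_isMinOn_windowEnergy
    (continuous_tiltedPrimitive hf δ) (continuous_tiltedPrimitive hg δ) k I
  have hone := indicator_one_mem_windowProfiles I
  refine ⟨F, G, isTerminatedSubsolution_of_minimizes_windowEnergy hhf hhg hk₀ hk_even hk₁ hδ hI
    hF hG hmin,
    exists_Pot_lt_of_windowEnergy_lt (I := I) hk₀ hk_even hk₁ hδ.le hF.1 hG.1 hc ?_⟩
  have hA : tiltedPrimitive hg δ 1 + tiltedPrimitive hf δ 1 = Agap hf hg + 1 + 2 * δ := by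
    rw [tiltedPrimitive, tiltedPrimitive, Agap, Pot_eq]
    ring
  calc windowEnergy (tiltedPrimitive hf δ) (tiltedPrimitive hg δ) k I F G
      ≤ I.card * (Agap hf hg + 1 + 2 * δ) - ∑ i ∈ I, ∑ j ∈ I, k (i - j) := by
        rw [← hA, ← windowEnergy_indicator_one]
        exact hmin _ hone _ hone
    _ < I.card * c := by
        rw [← hδc]
        linarith

end Subsolution

namespace IsGreatestTerminatedFixedPoint

variable {hf hg : ℝ → ℝ} {k F G : ℤ → ℝ}

lemma iSup_eq_one (hmax : IsGreatestTerminatedFixedPoint hf hg k F G) (hhf : MemX hf)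
    (hhg : MemX hg) (hgap : StrictPosGap hf hg) (hA : Agap hf hg < 0) (hk₀ : 0 ≤ k)
    (hk_even : Function.Even k) (hk₁ : HasSum k 1) : (⨆ i, G i, ⨆ i, F i) = (1 : ℝ × ℝ) := by
  have le_iSup_profile {P : ℤ → ℝ} (hP : P ≤ 1) (i : ℤ) : P i ≤ ⨆ i, P i :=
    le_ciSup ⟨1, forall_mem_range.2 hP⟩ i
  refine hgap.eq_one_of_forall_exists_Pot_le hhf hhg hA ⟨⟨?_, ?_⟩, ?_, ?_⟩ fun ε hε ↦ ?_
  · exact Real.iSup_nonneg hmax.right_mem.1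
  · exact Real.iSup_nonneg hmax.left_mem.1
  · exact ciSup_le hmax.right_mem.2
  · exact ciSup_le hmax.left_mem.2
  · obtain ⟨F', G', hsub, i, j, hlt⟩ := exists_isTerminatedSubsolution_Pot_lt hhf hhg hk₀ hk_even
      hk₁ (lt_min (lt_add_of_pos_right (Agap hf hg) hε) hA) (min_le_right _ _)
    obtain ⟨hF, hG⟩ := hmax.upper F' G' hsub
    exact ⟨(G' i, F' j), ⟨⟨hsub.right_mem.1 i, hsub.left_mem.1 j⟩,
      (hG i).trans (le_iSup_profile hmax.right_mem.2 i),
      (hF j).trans (le_iSup_profile hmax.left_mem.2 j)⟩, hlt.le.trans (min_le_left _ _)⟩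

lemma tendsto_atTop (hmax : IsGreatestTerminatedFixedPoint hf hg k F G) (hhf : MemX hf)
    (hhg : MemX hg) (hgap : StrictPosGap hf hg) (hA : Agap hf hg < 0) (hk₀ : 0 ≤ k)
    (hk_even : Function.Even k) (hk₁ : HasSum k 1) :
    Tendsto F atTop (𝓝 1) ∧ Tendsto G atTop (𝓝 1) := by
  obtain ⟨hF, hG⟩ := hmax.monotone hhf.2 hk₀ hk₁
  obtain ⟨hG_sup : ⨆ i, G i = 1, hF_sup : ⨆ i, F i = 1⟩ :=
    Prod.ext_iff.1 (hmax.iSup_eq_one hhf hhg hgap hA hk₀ hk_even hk₁)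
  exact ⟨hF_sup ▸ tendsto_atTop_ciSup hF ⟨1, forall_mem_range.2 hmax.left_mem.2⟩,
    hG_sup ▸ tendsto_atTop_ciSup hG ⟨1, forall_mem_range.2 hmax.right_mem.2⟩⟩

end IsGreatestTerminatedFixedPoint

/-! ### From the lattice to the line -/

/-- The step function on `ℝ` with value `f i` on `[i Δ, (i + 1) Δ)`. -/
def latticeExtension (Δ : ℝ) (f : ℤ → ℝ) (x : ℝ) : ℝ := f ⌊x / Δ⌋

section LatticeExtension

variable {Δ : ℝ} {f : ℤ → ℝ}

lemma latticeExtension_intCast_mul (hΔ : Δ ≠ 0) (f : ℤ → ℝ) (i : ℤ) :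
    latticeExtension Δ f (i * Δ) = f i := by
  rw [latticeExtension, mul_div_cancel_right₀ _ hΔ, Int.floor_intCast]

lemma memPsi_latticeExtension (hΔ : 0 ≤ Δ) (hf : Monotone f) (hf₁ : f ∈ Icc 0 1) :
    MemPsi (latticeExtension Δ f) :=
  ⟨fun _ _ hxy ↦ hf (Int.floor_mono (div_le_div_of_nonneg_right hxy hΔ)),
    fun _ ↦ ⟨hf₁.1 _, hf₁.2 _⟩⟩

lemma interpolates_latticeExtension (hΔ : 0 < Δ) {a b : ℝ} (ha : Tendsto f atBot (𝓝 a))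
    (hb : Tendsto f atTop (𝓝 b)) : Interpolates (latticeExtension Δ f) a b :=
  ⟨ha.comp (tendsto_floor_atBot.comp (tendsto_id.atBot_div_const hΔ)),
    hb.comp (tendsto_floor_atTop.comp (tendsto_id.atTop_div_const hΔ))⟩

end LatticeExtension

theorem discrete_terminated_fixed_point_general {hf hg : ℝ → ℝ} {k : ℤ → ℝ} {Δ : ℝ} (hΔ : 0 < Δ)
    (hk₀ : 0 ≤ k) (hk_even : Function.Even k) (hk₁ : HasSum k 1) (hhf : MemX hf) (hhg : MemX hg)
    (hgap : StrictPosGap hf hg) (hA : Agap hf hg < 0) :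
    ∃ F G : ℝ → ℝ,
      MemPsi F ∧ MemPsi G ∧ Interpolates F 0 1 ∧ Interpolates G 0 1 ∧
      (∀ i : ℤ, (i : ℝ) * Δ < 0 → F ((i : ℝ) * Δ) = 0) ∧
      (∀ i : ℤ, 0 ≤ (i : ℝ) * Δ →
        F ((i : ℝ) * Δ) = hf (dconv (fun j ↦ G ((j : ℝ) * Δ)) k i)) ∧
      (∀ i : ℤ, G ((i : ℝ) * Δ) = hg (dconv (fun j ↦ F ((j : ℝ) * Δ)) k i)) := by
  obtain ⟨F, G, hmax⟩ := exists_isGreatestTerminatedFixedPoint hhf hhg hk₀ hk₁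
  obtain ⟨hF, hG⟩ := hmax.monotone hhf.2 hk₀ hk₁
  obtain ⟨hF_top, hG_top⟩ := hmax.tendsto_atTop hhf hhg hgap hA hk₀ hk_even hk₁
  refine ⟨latticeExtension Δ F, latticeExtension Δ G,
    memPsi_latticeExtension hΔ.le hF hmax.left_mem, memPsi_latticeExtension hΔ.le hG hmax.right_mem,
    interpolates_latticeExtension hΔ hmax.tendsto_left_atBot hF_top,
    interpolates_latticeExtension hΔ (hmax.tendsto_right_atBot hhf hhg hgap hk₀ hk₁) hG_top, ?_⟩
  simp only [latticeExtension_intCast_mul hΔ.ne']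
  refine ⟨fun i hi ↦ ?_, fun i hi ↦ ?_, fun i ↦ (congrFun hmax.right_eq i).symm⟩
  · have hi' : i < 0 := Int.cast_lt_zero.1 (neg_of_mul_neg_left hi hΔ.le)
    rw [← hmax.left_eq, terminatedUpdate_of_neg hf k G hi']
  · have hi' : 0 ≤ i := Int.cast_nonneg_iff.1 (nonneg_of_mul_nonneg_left hi hΔ)
    rw [← congrFun hmax.left_eq i, terminatedUpdate_of_nonneg hf k G hi', latticeUpdate]

/-- **Discrete terminated fixed point with positive gap.** -/
theorem discrete_terminated_fixed_point
    (ω hf hg : ℝ → ℝ) (Δ : ℝ) (hΔ : 0 < Δ)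
    (hω : IsAveragingKernel ω) (hreg : IsRegularKernel ω)
    (hhf : MemX hf) (hhg : MemX hg)
    (hgap : StrictPosGap hf hg)
    (hA : Agap hf hg < -(Δ * kerSup ω)) :
    ∃ F G : ℝ → ℝ,
      MemPsi F ∧ MemPsi G ∧ Interpolates F 0 1 ∧ Interpolates G 0 1 ∧
      (∀ i : ℤ, (i : ℝ) * Δ < 0 → F ((i : ℝ) * Δ) = 0) ∧
      (∀ i : ℤ, 0 ≤ (i : ℝ) * Δ →
        F ((i : ℝ) * Δ) = hf (dconv (fun j => G ((j : ℝ) * Δ)) (dker ω Δ) i)) ∧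
      (∀ i : ℤ, G ((i : ℝ) * Δ) =
        hg (dconv (fun j => F ((j : ℝ) * Δ)) (dker ω Δ) i)) := by
  obtain ⟨hω_even, hω₀, -, hω_int, hω₁⟩ := hω
  exact discrete_terminated_fixed_point_general hΔ (dker_nonneg hΔ.le hω₀) (dker_even hω_even Δ)
    (hω₁ ▸ hasSum_dker hΔ hω_int) hhf hhg hgap
    (hA.trans_le (neg_nonpos.2 (mul_nonneg hΔ.le ENNReal.toReal_nonneg)))
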